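/- Every exact-repair regenerating code with parameters (n,k,d) = (5,4,4) and secondary parameters (B,α,β) satisfies 14B ≤ 21α + 57β (equivalently, 14B ≤ 7B_1 + 7B_2 − 6β, where B_1 = α + 6β and B_2 = 2α + 3β). -/

import Mathlib

open Finset

/-- Shannon entropy (base 2) of a finitely-valued random variable `X` on a finite
probability space with mass function `P`. -/
noncomputable def entH {Ω S : Type*} [Fintype Ω] (P : Ω → ℝ) (X : Ω → S) : ℝ :=
  letI := Classical.decEq S
  ∑ s ∈ Finset.univ.image X,
    -((∑ ω ∈ Finset.univ.filter (fun ω => X ω = s), P ω) *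
       Real.logb 2 (∑ ω ∈ Finset.univ.filter (fun ω => X ω = s), P ω))

/-- Conditional entropy `H(X | Y) = H(X, Y) - H(Y)`. -/
noncomputable def condH {Ω S T : Type*} [Fintype Ω] (P : Ω → ℝ) (X : Ω → S) (Y : Ω → T) : ℝ :=
  entH P (fun ω => (X ω, Y ω)) - entH P Y

/-- The joint random variable `W_J = (W_j : j ∈ J)`. -/
def jointW {Ω : Type*} {n : ℕ} {σW : Fin n → Type*} (W : ∀ j, Ω → σW j)
    (J : Finset (Fin n)) : Ω → ∀ j : J, σW j.1 :=
  fun ω j => W j.1 ω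

/-- The joint random variable `(S_i^j : (i,j) ∈ E)` for a set `E` of pairs. -/
def jointS {Ω : Type*} {n : ℕ} {σS : Fin n → Fin n → Type*} (S : ∀ i j, Ω → σS i j)
    (E : Finset (Fin n × Fin n)) : Ω → ∀ e : E, σS e.1.1 e.1.2 :=
  fun ω e => S e.1.1 e.1.2 ω

/-- The joint random variable `S_I^j = (S_i^j : i ∈ I)`. -/
def jointSto {Ω : Type*} {n : ℕ} {σS : Fin n → Fin n → Type*} (S : ∀ i j, Ω → σS i j)
    (I : Finset (Fin n)) (j : Fin n) : Ω → ∀ i : I, σS i.1 j :=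
  fun ω i => S i.1 j ω

/-- An exact-repair regenerating code with parameters `(n,k,d)` (with `1 ≤ k ≤ d ≤ n-1`)
and secondary parameters `(B,α,β)`: the file `M`, the stored data `W j` on server `j`
(servers indexed by `Fin n`, server `j` of the paper being index `j-1`), and the helper
information `S i j` sent from server `i` to repair server `j`. -/
structure IsRegenCode {Ω : Type*} [Fintype Ω] (n k d : ℕ) (B α β : ℝ) (P : Ω → ℝ)
    {σM : Type*} {σW : Fin n → Type*} {σS : Fin n → Fin n → Type*}
    (M : Ω → σM) (W : ∀ j, Ω → σW j) (S : ∀ i j, Ω → σS i j) : Prop where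
  prob_nonneg : ∀ ω, 0 ≤ P ω
  prob_sum : ∑ ω, P ω = 1
  hk : 1 ≤ k
  hkd : k ≤ d
  hdn : d + 1 ≤ n
  hB : 0 ≤ B
  hα : 0 ≤ α
  hβ : 0 ≤ β
  hMB : entH P M = B
  hWα : ∀ j, entH P (W j) = α
  hWM : ∀ j, condH P (W j) M = 0
  hMW : ∀ J : Finset (Fin n), k ≤ J.card → condH P M (jointW W J) = 0
  hSβ : ∀ i j, i ≠ j → entH P (S i j) = β
  hSW : ∀ i j, i ≠ j → condH P (S i j) (W i) = 0
  hWS : ∀ (j : Fin n) (I : Finset (Fin n)), d ≤ I.card → j ∉ I →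
    condH P (W j) (jointSto S I j) = 0

/-- `B_q = qα + ((k-q)(k-q-1)/2)β + (d+1-k)(k-q)β`. -/
noncomputable def Bfun (k d q : ℕ) (α β : ℝ) : ℝ :=
  (q : ℝ) * α + (((k - q) * (k - q - 1) : ℕ) : ℝ) / 2 * β
    + (((d + 1 - k) * (k - q) : ℕ) : ℝ) * β

/-!
Joint entropies of the stored data `W_j` and of the helper information `S_i^j` form a polymatroid
`f` on the pairs `(i, j)`, and knowing a set `X` of data is as good as knowing everything that can
be sent and repaired from it. So `f U + f I ≤ f X + f Y` as soon as `U` is recoverable from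
`X ∪ Y`, and `I` both from `X` and from `Y`. All constraints are invariant under permutations of
the servers, hence `f` may be replaced by its average over them.

Number the servers from `0` and put `D = {W_1, S_2^0, S_3^0, S_4^0}`, `F = {W_0, S_1^2, S_2^0}` and
`K = {W_0, W_2, S_1^2, S_3^0, S_4^1}`. Seven instances of the exchange inequality give, for
`(n, k, d) = (5, 4, 4)` and a symmetric `f`,
* `B ≤ f F + α + β`,
* `2 B + f F + β ≤ α + 2 f D + f K`,
* `B + f K + 2 f F ≤ 4 f D`,

and `f D ≤ α + 3 β`. Three times the first plus the other two is `6 B ≤ 10 α + 20 β`, so that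
`3 B ≤ 5 α + 10 β`. Adding `7/5` of the cut-set bound `B ≤ 10 β` to `21/5` of this inequality gives
`14 B ≤ 21 α + 56 β`. The inequality `3 B ≤ 5 α + 10 β` passes through the points
`(α, β, B) = (4, 1, 10)` and `(6, 3, 20)` of the two layered codes; the exchanges were found by
linear programming as ones that are tight at both points.
-/

/-! ### Entropy of partitions -/

section PartitionEntropy

variable {Ω : Type*} [Fintype Ω] {P : Ω → ℝ} {r s t : Setoid Ω}

open Classical in
/-- The mass of the class of `ω` under the equivalence relation `r`, for a mass function `P`. -/
noncomputable def classMass (P : Ω → ℝ) (r : Setoid Ω) (ω : Ω) : ℝ :=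
  ∑ x with r x ω, P x

/-- The Shannon entropy (base 2) of the partition of a finite space into the classes of `r`.
Partitions replace random variables because they form a lattice: a tuple of random variables is
an infimum, and `Y` is a function of `X` when `Setoid.ker X ≤ Setoid.ker Y`. -/
noncomputable def partitionEnt (P : Ω → ℝ) (r : Setoid Ω) : ℝ :=
  -∑ ω, P ω * Real.logb 2 (classMass P r ω)

theorem entH_eq_partitionEnt {S : Type*} (P : Ω → ℝ) (X : Ω → S) :
    entH P X = partitionEnt P (Setoid.ker X) := by
  classical
  unfold entH partitionEnt
  rw [← sum_neg_distrib, ← sum_fiberwise_of_maps_to (t := univ.image X) (g := X)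
    fun ω _ => mem_image_of_mem X (mem_univ ω)]
  refine sum_congr (by congr) fun s _ => ?_
  rw [sum_neg_distrib, sum_mul]
  congr 1
  refine sum_congr (by congr) fun ω hω => ?_
  simp only [classMass, Setoid.ker_def, (mem_filter.1 hω).2]

theorem condH_eq_partitionEnt {S T : Type*} (P : Ω → ℝ) (X : Ω → S) (Y : Ω → T) :
    condH P X Y =
      partitionEnt P (Setoid.ker X ⊓ Setoid.ker Y) - partitionEnt P (Setoid.ker Y) := by
  rw [condH, entH_eq_partitionEnt, entH_eq_partitionEnt]
  congr 2
  ext ω ω'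
  simp only [Setoid.ker_def, Setoid.inf_iff_and, Prod.mk.injEq]

theorem partitionEnt_top (hsum : ∑ ω, P ω = 1) : partitionEnt P ⊤ = 0 := by
  simp [partitionEnt, classMass, Setoid.top_def, hsum]

theorem classMass_congr {ω ω' : Ω} (h : r ω ω') : classMass P r ω = classMass P r ω' := by
  classical
  exact sum_congr (filter_congr fun x _ => ⟨fun hx => r.trans' hx h,
    fun hx => r.trans' hx (r.symm' h)⟩) fun _ _ => rfl

theorem classMass_nonneg (hP : ∀ ω, 0 ≤ P ω) (r : Setoid Ω) (ω : Ω) : 0 ≤ classMass P r ω :=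
  sum_nonneg fun x _ => hP x

theorem sum_le_classMass (hP : ∀ ω, 0 ≤ P ω) {C : Finset Ω} {ω : Ω} (hC : ∀ x ∈ C, r x ω) :
    ∑ x ∈ C, P x ≤ classMass P r ω := by
  classical
  exact sum_le_sum_of_subset_of_nonneg (fun x hx => mem_filter.2 ⟨mem_univ x, hC x hx⟩)
    fun x _ _ => hP x

theorem le_classMass (hP : ∀ ω, 0 ≤ P ω) (r : Setoid Ω) (ω : Ω) : P ω ≤ classMass P r ω := by
  simpa using sum_le_classMass hP (C := {ω}) (ω := ω) (r := r) (by simp)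

theorem classMass_mono (hP : ∀ ω, 0 ≤ P ω) (h : r ≤ s) (ω : Ω) :
    classMass P r ω ≤ classMass P s ω := by
  classical
  exact sum_le_classMass hP fun _ hx => h (mem_filter.1 hx).2

theorem partitionEnt_anti (hP : ∀ ω, 0 ≤ P ω) (h : r ≤ s) :
    partitionEnt P s ≤ partitionEnt P r := by
  refine neg_le_neg (sum_le_sum fun ω _ => ?_)
  rcases (hP ω).eq_or_lt with h0 | h0
  · simp [← h0]
  · exact mul_le_mul_of_nonneg_left (Real.logb_le_logb_of_le one_lt_two
      (h0.trans_le (le_classMass hP r ω)) (classMass_mono hP h ω)) h0.le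

theorem sum_div_classMass_le_one (hP : ∀ ω, 0 ≤ P ω) {C : Finset Ω}
    (hC : ∀ x ∈ C, ∀ y ∈ C, r x y) : ∑ ω ∈ C, P ω / classMass P r ω ≤ 1 := by
  rcases C.eq_empty_or_nonempty with rfl | ⟨ω₀, hω₀⟩
  · simp
  · calc ∑ ω ∈ C, P ω / classMass P r ω = (∑ ω ∈ C, P ω) / classMass P r ω₀ := by
          rw [sum_div]
          exact sum_congr rfl fun ω hω => by rw [classMass_congr (hC ω hω ω₀ hω₀)]
      _ ≤ 1 := div_le_one_of_le₀ (sum_le_classMass hP fun ω hω => hC ω hω ω₀ hω₀)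
          (classMass_nonneg hP r ω₀)

open Classical in
theorem sum_class_mul_classMass_div_le (hP : ∀ ω, 0 ≤ P ω) (hr : r ≤ t) (hs : s ≤ t) (x : Ω) :
    ∑ ω with r ω x, P ω * (classMass P s ω / classMass P (r ⊓ s) ω) ≤ classMass P t x :=
  calc ∑ ω with r ω x, P ω * (classMass P s ω / classMass P (r ⊓ s) ω)
      = ∑ ω with r ω x, ∑ y with s y ω, P y * (P ω / classMass P (r ⊓ s) ω) := by
        refine sum_congr rfl fun ω _ => ?_
        rw [← sum_mul, ← classMass]
        ring
    _ = ∑ y with t y x, ∑ ω with r ω x ∧ s y ω, P y * (P ω / classMass P (r ⊓ s) ω) := by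
        refine sum_comm' fun ω y => ?_
        simp only [mem_filter, mem_univ, true_and]
        exact ⟨fun h => ⟨h, t.trans' (hs h.2) (hr h.1)⟩, And.left⟩
    _ ≤ ∑ y with t y x, P y * 1 := by
        refine sum_le_sum fun y _ => ?_
        rw [← mul_sum]
        refine mul_le_mul_of_nonneg_left (sum_div_classMass_le_one hP fun ω hω ω' hω' => ?_) (hP y)
        obtain ⟨-, hx, hy⟩ := mem_filter.1 hω
        obtain ⟨-, hx', hy'⟩ := mem_filter.1 hω'
        exact ⟨r.trans' hx (r.symm' hx'), s.trans' (s.symm' hy) hy'⟩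
    _ = classMass P t x := by simp only [mul_one, classMass]

theorem sum_mul_classMass_div_le (hP : ∀ ω, 0 ≤ P ω) (hr : r ≤ t) (hs : s ≤ t) :
    ∑ ω, P ω * (classMass P r ω * classMass P s ω / (classMass P (r ⊓ s) ω * classMass P t ω)) ≤
      ∑ ω, P ω := by
  classical
  calc ∑ ω, P ω * (classMass P r ω * classMass P s ω /
        (classMass P (r ⊓ s) ω * classMass P t ω))
      = ∑ ω, ∑ x with r x ω, P x / classMass P t x *
          (P ω * (classMass P s ω / classMass P (r ⊓ s) ω)) := by
        refine sum_congr rfl fun ω _ => ?_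
        rw [← sum_mul, sum_congr rfl fun x hx => by
          rw [classMass_congr (hr (mem_filter.1 hx).2)], ← sum_div, ← classMass]
        simp only [div_eq_mul_inv, mul_inv]
        ring
    _ = ∑ x, P x / classMass P t x *
          ∑ ω with r ω x, P ω * (classMass P s ω / classMass P (r ⊓ s) ω) := by
        simp only [mul_sum]
        exact sum_comm' fun ω x => by simp [r.comm']
    _ ≤ ∑ x, P x := by
        refine sum_le_sum fun x _ => (mul_le_mul_of_nonneg_left
          (sum_class_mul_classMass_div_le hP hr hs x)
          (div_nonneg (hP x) (classMass_nonneg hP t x))).trans ?_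
        exact mul_le_of_le_div₀ (hP x) (classMass_nonneg hP t x) le_rfl

-- `log x ≤ x - 1`, applied to the quotient of masses whose mean is at most the total mass.
theorem partitionEnt_submod (hP : ∀ ω, 0 ≤ P ω) (hr : r ≤ t) (hs : s ≤ t) :
    partitionEnt P (r ⊓ s) + partitionEnt P t ≤ partitionEnt P r + partitionEnt P s := by
  have hlog : ∀ ω, P ω * (Real.log (classMass P r ω) + Real.log (classMass P s ω)
      - Real.log (classMass P (r ⊓ s) ω) - Real.log (classMass P t ω)) ≤
      P ω * (classMass P r ω * classMass P s ω /
        (classMass P (r ⊓ s) ω * classMass P t ω)) - P ω := fun ω => by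
    rcases (hP ω).eq_or_lt with h0 | h0
    · simp [← h0]
    · have hpos : ∀ u : Setoid Ω, 0 < classMass P u ω := fun u => h0.trans_le (le_classMass hP u ω)
      have hr0 := hpos r
      have hs0 := hpos s
      have hrs0 := hpos (r ⊓ s)
      have ht0 := hpos t
      have h := Real.log_le_sub_one_of_pos (x := classMass P r ω * classMass P s ω /
        (classMass P (r ⊓ s) ω * classMass P t ω)) (by positivity)
      rw [Real.log_div (by positivity) (by positivity), Real.log_mul hr0.ne' hs0.ne',
        Real.log_mul hrs0.ne' ht0.ne'] at h
      nlinarith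
  have hsum := sum_le_sum fun ω (_ : ω ∈ univ) => hlog ω
  rw [sum_sub_distrib] at hsum
  have hquot := sum_mul_classMass_div_le hP hr hs
  have hdiff : partitionEnt P (r ⊓ s) + partitionEnt P t - partitionEnt P r - partitionEnt P s =
      (∑ ω, P ω * (Real.log (classMass P r ω) + Real.log (classMass P s ω)
        - Real.log (classMass P (r ⊓ s) ω) - Real.log (classMass P t ω))) / Real.log 2 := by
    simp only [partitionEnt, Real.logb, ← sum_neg_distrib, ← sum_add_distrib,
      ← sum_sub_distrib, sum_div]
    exact sum_congr rfl fun ω _ => by ring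
  have hnonpos := div_nonpos_of_nonpos_of_nonneg (hsum.trans (sub_nonpos.2 hquot))
    (Real.log_pos one_lt_two).le
  linarith

theorem partitionEnt_inf_eq_of_le (hP : ∀ ω, 0 ≤ P ω) (hr : r ≤ s)
    (h : partitionEnt P (s ⊓ t) = partitionEnt P s) :
    partitionEnt P (r ⊓ t) = partitionEnt P r := by
  have hsub := partitionEnt_submod hP hr (inf_le_left : s ⊓ t ≤ s)
  rw [← inf_assoc, inf_eq_left.2 hr] at hsub
  exact le_antisymm (by linarith) (partitionEnt_anti hP inf_le_left)

theorem partitionEnt_inf_finset_inf (hP : ∀ ω, 0 ≤ P ω) {ι : Type*} {u : ι → Setoid Ω}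
    {I : Finset ι} (h : ∀ i ∈ I, partitionEnt P (r ⊓ u i) = partitionEnt P r) :
    partitionEnt P (r ⊓ I.inf u) = partitionEnt P r := by
  classical
  induction I using Finset.induction_on with
  | empty => simp
  | insert i I _ ih =>
    rw [forall_mem_insert] at h
    rw [inf_insert, inf_comm (u i), ← inf_assoc, partitionEnt_inf_eq_of_le hP inf_le_left h.1,
      ih h.2]

end PartitionEntropy

/-! ### Regenerating polymatroids -/

/-- A set function on the data of `n` servers that satisfies the inequalities of the joint entropy
in an exact-repair regenerating code with parameters `(n, k, d)`, `(B, α, β)`. The pair `(i, j)`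
with `i ≠ j` stands for the helper information `S_i^j`, and the pair `(j, j)` for the stored
data `W_j`. -/
structure IsRegenPolymatroid {n : ℕ} (k d : ℕ) (B α β : ℝ)
    (f : Finset (Fin n × Fin n) → ℝ) : Prop where
  empty : f ∅ = 0
  mono : ∀ {X Y}, X ⊆ Y → f X ≤ f Y
  submod : ∀ X Y, f (X ∪ Y) + f (X ∩ Y) ≤ f X + f Y
  send : ∀ {X i} (j), (i, i) ∈ X → f (insert (i, j) X) = f X
  repair : ∀ {X} {I : Finset (Fin n)} {j}, d ≤ #I → j ∉ I → (∀ i ∈ I, (i, j) ∈ X) →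
    f (insert (j, j) X) = f X
  server : ∀ j, f {(j, j)} = α
  helper : ∀ {i j}, i ≠ j → f {(i, j)} = β
  file : ∀ {J : Finset (Fin n)}, k ≤ #J → f J.diag = B

/-- The data known from `X` after one round, in which every server stored in `X` sends its helper
information and every server that has received `d` pieces of helper information is repaired. -/
def repairStep {n : ℕ} (d : ℕ) (X : Finset (Fin n × Fin n)) : Finset (Fin n × Fin n) :=
  {e | e ∈ X ∨ (e.1, e.1) ∈ X ∨ (e.1 = e.2 ∧ d ≤ #{i | i ≠ e.1 ∧ (i, e.1) ∈ X})}

/-- The data known from `X` after `2 * n` rounds of sending and repairing, which is all that can be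
recovered from `X`: every second round repairs a new server until none is left to repair. -/
def repairClosure {n : ℕ} (d : ℕ) (X : Finset (Fin n × Fin n)) : Finset (Fin n × Fin n) :=
  (repairStep d)^[2 * n] X

theorem subset_repairStep {n : ℕ} (d : ℕ) (X : Finset (Fin n × Fin n)) : X ⊆ repairStep d X :=
  fun e he => mem_filter.2 ⟨mem_univ e, .inl he⟩

theorem subset_repairClosure {n : ℕ} (d : ℕ) (X : Finset (Fin n × Fin n)) :
    X ⊆ repairClosure d X :=
  Function.id_le_iterate_of_id_le (subset_repairStep d) (2 * n) X

namespace IsRegenPolymatroid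

variable {n k d : ℕ} {B α β : ℝ} {f : Finset (Fin n × Fin n) → ℝ}

section Closure

variable (hf : IsRegenPolymatroid k d B α β f) {X Y U I : Finset (Fin n × Fin n)}
include hf

theorem union_le (X Y : Finset (Fin n × Fin n)) : f (X ∪ Y) ≤ f X + f Y := by
  have hsub := hf.submod X Y
  have hnn := hf.mono (empty_subset (X ∩ Y))
  rw [hf.empty] at hnn
  linarith

theorem union_eq (h : ∀ e ∈ Y, f (insert e X) = f X) : f (X ∪ Y) = f X := by
  induction Y using Finset.induction_on with
  | empty => simp
  | insert e Y _ ih =>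
    rw [forall_mem_insert] at h
    have hsub := hf.submod (X ∪ Y) (insert e X)
    have hunion : X ∪ insert e Y = (X ∪ Y) ∪ insert e X := by grind
    have hinter : f X ≤ f ((X ∪ Y) ∩ insert e X) :=
      hf.mono (subset_inter subset_union_left (subset_insert e X))
    have hle : f X ≤ f (X ∪ insert e Y) := hf.mono subset_union_left
    rw [hunion] at hle ⊢
    linarith [ih h.2, h.1]

theorem map_repairStep (X : Finset (Fin n × Fin n)) : f (repairStep d X) = f X := by
  rw [← union_eq_right.2 (subset_repairStep d X)]
  refine hf.union_eq fun ⟨a, b⟩ he => ?_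
  rcases (mem_filter.1 he).2 with h | h | ⟨hab, hcard⟩
  · rw [insert_eq_of_mem h]
  · exact hf.send b h
  · obtain rfl : a = b := hab
    exact hf.repair hcard (by simp) fun i hi => (mem_filter.1 hi).2.2

theorem map_repairClosure (X : Finset (Fin n × Fin n)) : f (repairClosure d X) = f X := by
  unfold repairClosure
  induction 2 * n with
  | zero => rfl
  | succ m ih => rw [Function.iterate_succ_apply', hf.map_repairStep, ih]

theorem le_of_subset_repairClosure (h : U ⊆ repairClosure d X) : f U ≤ f X :=
  (hf.mono h).trans_eq (hf.map_repairClosure X)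

theorem add_le_add_of_subset_repairClosure (hU : U ⊆ repairClosure d (X ∪ Y))
    (hX : I ⊆ repairClosure d X) (hY : I ⊆ repairClosure d Y) : f U + f I ≤ f X + f Y :=
  calc f U + f I
      ≤ f (repairClosure d X ∪ repairClosure d Y) + f (repairClosure d X ∩ repairClosure d Y) :=
        add_le_add ((hf.le_of_subset_repairClosure hU).trans (hf.mono
          (union_subset_union (subset_repairClosure d X) (subset_repairClosure d Y))))
          (hf.mono (subset_inter hX hY))
    _ ≤ f X + f Y := by
        simpa only [hf.map_repairClosure] using hf.submod (repairClosure d X) (repairClosure d Y)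

theorem file_add_le_add_of_subset_repairClosure {J : Finset (Fin n)} (hJ : k ≤ #J)
    (hU : J.diag ⊆ repairClosure d (X ∪ Y)) (hX : I ⊆ repairClosure d X)
    (hY : I ⊆ repairClosure d Y) : B + f I ≤ f X + f Y :=
  hf.file hJ ▸ hf.add_le_add_of_subset_repairClosure hU hX hY

theorem le_card_mul (h : ∀ e ∈ X, e.1 ≠ e.2) : f X ≤ #X * β := by
  induction X using Finset.induction_on with
  | empty => simp [hf.empty]
  | insert e X he ih =>
    rw [forall_mem_insert] at h
    have hle := hf.union_le {e} X
    rw [card_insert_of_notMem he, insert_eq]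
    push_cast
    linarith [ih h.2, hf.helper h.1]

theorem insert_server_le {m : ℕ} (j : Fin n) (hX : #X = m) (h : ∀ e ∈ X, e.1 ≠ e.2) :
    f (insert (j, j) X) ≤ α + m * β := by
  have hle := hf.union_le {(j, j)} X
  rw [hf.server, ← insert_eq] at hle
  rw [← hX]
  linarith [hf.le_card_mul h]

theorem diag_le_card_mul (J : Finset (Fin n)) : f J.diag ≤ #J * α := by
  induction J using Finset.induction_on with
  | empty => simp [hf.empty]
  | insert j J hj ih =>
    have hle := hf.union_le {(j, j)} J.diag
    rw [card_insert_of_notMem hj, diag_insert, insert_eq]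
    push_cast
    linarith [hf.server j]

end Closure

end IsRegenPolymatroid

/-! ### The cut-set bound -/

theorem Bfun_self (d q : ℕ) (α β : ℝ) : Bfun q d q α β = q * α := by
  simp [Bfun]

theorem Bfun_succ {m d q : ℕ} (hqm : q ≤ m) (hmd : m ≤ d) (α β : ℝ) :
    Bfun (m + 1) d q α β = Bfun m d q α β + (d - m : ℕ) * β := by
  obtain ⟨a, rfl⟩ := Nat.exists_eq_add_of_le hqm
  obtain ⟨b, rfl⟩ := Nat.exists_eq_add_of_le hmd
  have hq_succ : q + a + 1 - q = a + 1 := by omega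
  have hm_succ : q + a + b + 1 - (q + a + 1) = b := by omega
  have hm : q + a + b + 1 - (q + a) = b + 1 := by omega
  have hb : q + a + b - (q + a) = b := by omega
  simp only [Bfun, hq_succ, hm_succ, hm, hb, Nat.add_sub_cancel_left, Nat.add_sub_cancel]
  rcases a with - | a
  · simp
  · push_cast [Nat.add_sub_cancel]
    ring

theorem diag_lt_succ_subset_repairStep {n : ℕ} {a b : Fin n} (hab : a ≤ b) :
    diag {i : Fin n | (i : ℕ) < a + 1} ⊆
      repairStep b (repairStep b (diag {i : Fin n | i < a} ∪ Ioc a b ×ˢ {a})) := by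
  rintro ⟨i, j⟩ hij
  obtain ⟨hia, rfl⟩ : i ≤ a ∧ i = j := by simpa [Nat.lt_succ_iff] using hij
  rcases hia.lt_or_eq with hlt | rfl
  · exact subset_repairStep _ _ (subset_repairStep _ _ (mem_union_left _ (by simpa using hlt)))
  have hcard : #((Iic b).erase i) = b := by
    rw [card_erase_of_mem (mem_Iic.2 hab), Fin.card_Iic, Nat.add_sub_cancel]
  refine mem_filter.2 ⟨mem_univ _, .inr (.inr ⟨rfl, hcard.ge.trans (card_le_card fun h hh => ?_)⟩)⟩
  obtain ⟨hhi, hhb⟩ := mem_erase.1 hh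
  refine mem_filter.2 ⟨mem_univ h, hhi, mem_filter.2 ⟨mem_univ _, ?_⟩⟩
  rcases lt_or_gt_of_ne hhi with hlt | hgt
  · exact .inr (.inl (mem_union_left _ (mem_diag.2 ⟨mem_filter.2 ⟨mem_univ h, hlt⟩, rfl⟩)))
  · exact .inl (mem_union_right _ (mem_product.2
      ⟨mem_Ioc.2 ⟨hgt, mem_Iic.1 hhb⟩, mem_singleton_self i⟩))

namespace IsRegenPolymatroid

variable {n k d : ℕ} {B α β : ℝ} {f : Finset (Fin n × Fin n) → ℝ}
  (hf : IsRegenPolymatroid k d B α β f)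
include hf

theorem diag_lt_succ_le {m : ℕ} (hmd : m ≤ d) (hdn : d < n) :
    f (diag {i : Fin n | i < m + 1}) ≤ f (diag {i : Fin n | i < m}) + (d - m : ℕ) * β := by
  let a : Fin n := ⟨m, hmd.trans_lt hdn⟩
  let b : Fin n := ⟨d, hdn⟩
  have hhelpers : f (Ioc a b ×ˢ {a}) ≤ (d - m : ℕ) * β := by
    simpa [a, b] using hf.le_card_mul (X := Ioc a b ×ˢ {a}) fun e he => by
      simp only [mem_product, mem_Ioc, mem_singleton] at he
      exact he.2 ▸ he.1.1.ne'
  have hsub : diag {i : Fin n | i < m + 1} ⊆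
      repairStep d (repairStep d (diag {i : Fin n | i < m} ∪ Ioc a b ×ˢ {a})) :=
    diag_lt_succ_subset_repairStep (a := a) (b := b) hmd
  calc f (diag {i : Fin n | i < m + 1})
      ≤ f (diag {i : Fin n | i < m} ∪ Ioc a b ×ˢ {a}) := by
        simpa only [hf.map_repairStep] using hf.mono hsub
    _ ≤ f (diag {i : Fin n | i < m}) + (d - m : ℕ) * β := (hf.union_le _ _).trans (by gcongr)

theorem le_Bfun {q : ℕ} (hqk : q ≤ k) (hkd : k ≤ d) (hdn : d < n) : B ≤ Bfun k d q α β := by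
  suffices h : ∀ m, q ≤ m → m ≤ d → f (diag {i : Fin n | i < m}) ≤ Bfun m d q α β by
    rw [← hf.file (J := {i : Fin n | i < k})
      (by simp [Fin.card_filter_val_lt, (hkd.trans_lt hdn).le])]
    exact h k hqk hkd
  intro m hqm
  induction m, hqm using Nat.le_induction with
  | base =>
    intro hqd
    simpa [Bfun_self, Fin.card_filter_val_lt, (hqd.trans_lt hdn).le]
      using hf.diag_le_card_mul {i : Fin n | i < q}
  | succ m hqm ih =>
    intro hmd
    rw [Bfun_succ hqm (Nat.le_of_succ_le hmd)]
    exact (hf.diag_lt_succ_le (Nat.le_of_succ_le hmd) hdn).trans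
      (by gcongr; exact ih (Nat.le_of_succ_le hmd))

end IsRegenPolymatroid

/-! ### Averaging over permutations of the servers -/

open scoped BigOperators

/-- The action of a permutation of the servers on sets of data. -/
def relabel {n : ℕ} (σ : Equiv.Perm (Fin n)) (X : Finset (Fin n × Fin n)) :
    Finset (Fin n × Fin n) :=
  X.map (σ.prodCongr σ).toEmbedding

/-- The average of a set function over all permutations of the servers. -/
noncomputable def serverAverage {n : ℕ} (f : Finset (Fin n × Fin n) → ℝ)
    (X : Finset (Fin n × Fin n)) : ℝ :=
  𝔼 σ : Equiv.Perm (Fin n), f (relabel σ X)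

theorem relabel_relabel {n : ℕ} (σ τ : Equiv.Perm (Fin n)) (X : Finset (Fin n × Fin n)) :
    relabel σ (relabel τ X) = relabel (σ * τ) X :=
  map_map _ _ X

theorem mem_relabel {n : ℕ} {σ : Equiv.Perm (Fin n)} {X : Finset (Fin n × Fin n)} {i j : Fin n}
    (h : (i, j) ∈ X) : (σ i, σ j) ∈ relabel σ X :=
  mem_map_of_mem (σ.prodCongr σ).toEmbedding h

theorem relabel_insert {n : ℕ} (σ : Equiv.Perm (Fin n)) (i j : Fin n)
    (X : Finset (Fin n × Fin n)) :
    relabel σ (insert (i, j) X) = insert (σ i, σ j) (relabel σ X) :=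
  map_insert _ _ X

theorem relabel_diag {n : ℕ} (σ : Equiv.Perm (Fin n)) (J : Finset (Fin n)) :
    relabel σ J.diag = (J.map σ.toEmbedding).diag := by
  ext ⟨i, j⟩
  simp [relabel]

namespace IsRegenPolymatroid

variable {n k d : ℕ} {B α β : ℝ}

theorem comp_relabel {f : Finset (Fin n × Fin n) → ℝ} (hf : IsRegenPolymatroid k d B α β f)
    (σ : Equiv.Perm (Fin n)) : IsRegenPolymatroid k d B α β fun X => f (relabel σ X) where
  empty := hf.empty
  mono h := hf.mono (map_subset_map.2 h)
  submod X Y := by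
    simpa only [relabel, map_union, map_inter] using hf.submod (relabel σ X) (relabel σ Y)
  send j hi := by
    rw [relabel_insert]
    exact hf.send _ (mem_relabel hi)
  repair {X I j} hI hj h := by
    rw [relabel_insert]
    refine hf.repair (I := I.map σ.toEmbedding) (by rwa [card_map]) (by simpa using hj) ?_
    exact forall_mem_map.2 fun i hi => mem_relabel (h i hi)
  server j := hf.server (σ j)
  helper hij := hf.helper (σ.injective.ne hij)
  file hJ := by
    rw [relabel_diag]
    exact hf.file (by rwa [card_map])

theorem expect {ι : Type*} [Fintype ι] [Nonempty ι] {f : ι → Finset (Fin n × Fin n) → ℝ}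
    (hf : ∀ a, IsRegenPolymatroid k d B α β (f a)) :
    IsRegenPolymatroid k d B α β fun X => 𝔼 a, f a X where
  empty := by simp only [(hf _).empty, Fintype.expect_const]
  mono h := expect_le_expect fun a _ => (hf a).mono h
  submod X Y := by
    rw [← expect_add_distrib, ← expect_add_distrib]
    exact expect_le_expect fun a _ => (hf a).submod X Y
  send j hi := by simp only [(hf _).send j hi]
  repair hI hj h := by simp only [(hf _).repair hI hj h]
  server j := by simp only [(hf _).server j, Fintype.expect_const]
  helper hij := by simp only [(hf _).helper hij, Fintype.expect_const]
  file hJ := by simp only [(hf _).file hJ, Fintype.expect_const]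

theorem average_relabel {f : Finset (Fin n × Fin n) → ℝ} (hf : IsRegenPolymatroid k d B α β f) :
    IsRegenPolymatroid k d B α β (serverAverage f) :=
  .expect hf.comp_relabel

end IsRegenPolymatroid

/-- Invariance of a set function on the data of `n` servers under permutations of the servers. -/
def IsServerSymmetric {n : ℕ} (f : Finset (Fin n × Fin n) → ℝ) : Prop :=
  ∀ (σ : Equiv.Perm (Fin n)) X, f (relabel σ X) = f X

theorem IsServerSymmetric.eq_of_relabel_eq {n : ℕ} {f : Finset (Fin n × Fin n) → ℝ}
    (hsymm : IsServerSymmetric f) {X Y : Finset (Fin n × Fin n)} (σ : Equiv.Perm (Fin n))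
    (h : relabel σ X = Y) : f X = f Y :=
  h ▸ (hsymm σ X).symm

theorem isServerSymmetric_serverAverage {n : ℕ} (f : Finset (Fin n × Fin n) → ℝ) :
    IsServerSymmetric (serverAverage f) :=
  fun τ X => Fintype.expect_equiv (Equiv.mulRight τ) _ _ fun σ => by
    rw [relabel_relabel, Equiv.coe_mulRight]

/-! ### The parameters `(5, 4, 4)` -/

namespace IsRegenPolymatroid

variable {B α β : ℝ} {f : Finset (Fin 5 × Fin 5) → ℝ} (hf : IsRegenPolymatroid 4 4 B α β f)
include hf

variable (hsymm : IsServerSymmetric f)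
include hsymm

theorem file_le_add_server_add_helper : B ≤ f {(0, 0), (1, 2), (2, 0)} + α + β := by
  have hexchange : f {(3, 3), (4, 4), (1, 0), (2, 0)} + f {(3, 4)} ≤
      f {(4, 4), (3, 4)} + f {(3, 3), (1, 0), (2, 0)} :=
    hf.add_le_add_of_subset_repairClosure (by decide +kernel) (by decide +kernel)
      (by decide +kernel)
  have hrecover : B + f {(0, 0), (2, 0)} ≤
      f {(0, 0), (1, 2), (2, 0)} + f {(3, 3), (4, 4), (1, 0), (2, 0)} :=
    hf.file_add_le_add_of_subset_repairClosure (J := {0, 1, 2, 3}) (by decide)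
      (by decide +kernel) (by decide +kernel) (by decide +kernel)
  have hcongr : f {(4, 4), (3, 4)} = f {(0, 0), (2, 0)} :=
    hsymm.eq_of_relabel_eq (c[0, 4] * c[2, 3]) (by decide +kernel)
  have hhelpers : f {(3, 3), (1, 0), (2, 0)} ≤ α + 2 * β :=
    mod_cast hf.insert_server_le (m := 2) 3 rfl (by decide)
  linarith [hf.helper (i := 3) (j := 4) (by decide)]

theorem two_mul_file_add_helper_le :
    2 * B + f {(0, 0), (1, 2), (2, 0)} + β ≤
      α + 2 * f {(1, 1), (2, 0), (3, 0), (4, 0)} +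
        f {(0, 0), (2, 2), (1, 2), (3, 0), (4, 1)} := by
  have hserver : f {(0, 0), (2, 2), (1, 2), (4, 1)} + f {(0, 2)} ≤
      f {(0, 0)} + f {(2, 2), (0, 2), (1, 2), (4, 1)} :=
    hf.add_le_add_of_subset_repairClosure (by decide +kernel) (by decide +kernel)
      (by decide +kernel)
  have hserver_congr : f {(2, 2), (0, 2), (1, 2), (4, 1)} = f {(0, 0), (1, 2), (2, 0), (3, 0)} :=
    hsymm.eq_of_relabel_eq c[0, 3, 4, 1, 2] (by decide +kernel)
  have hexchange : f {(0, 0), (2, 2), (1, 2), (3, 0), (4, 1)} + f {(0, 0), (1, 2), (2, 0)} ≤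
      f {(0, 0), (1, 2), (2, 0), (3, 0)} + f {(0, 0), (2, 2), (1, 2), (4, 1)} :=
    hf.add_le_add_of_subset_repairClosure (by decide +kernel) (by decide +kernel)
      (by decide +kernel)
  have hrecover : B + f {(0, 0), (1, 2), (2, 0), (3, 0)} ≤
      f {(1, 1), (2, 0), (3, 0), (4, 0)} + f {(0, 0), (2, 2), (1, 2), (4, 3), (3, 0)} :=
    hf.file_add_le_add_of_subset_repairClosure (J := {0, 1, 2, 3}) (by decide)
      (by decide +kernel) (by decide +kernel) (by decide +kernel)
  have hrecover_congr : f {(0, 0), (2, 2), (1, 2), (3, 0), (4, 1)} =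
      f {(0, 0), (2, 2), (1, 2), (4, 3), (3, 0)} :=
    hsymm.eq_of_relabel_eq (c[0, 2] * c[1, 3]) (by decide +kernel)
  linarith [hf.server 0, hf.helper (i := 0) (j := 2) (by decide)]

theorem file_add_le_four_mul :
    B + f {(0, 0), (2, 2), (1, 2), (3, 0), (4, 1)} + 2 * f {(0, 0), (1, 2), (2, 0)} ≤
      4 * f {(1, 1), (2, 0), (3, 0), (4, 0)} := by
  have hserver : f {(0, 0), (2, 2), (1, 2), (3, 2)} ≤ f {(0, 0), (1, 2), (3, 2), (4, 2)} :=
    hf.le_of_subset_repairClosure (by decide +kernel)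
  have hserver_congr : f {(1, 1), (2, 0), (3, 0), (4, 0)} = f {(0, 0), (1, 2), (3, 2), (4, 2)} :=
    hsymm.eq_of_relabel_eq c[0, 2, 1] (by decide +kernel)
  have hexchange : f {(1, 1), (2, 2), (3, 0), (4, 0), (3, 2)} + f {(0, 0), (1, 2), (2, 0)} ≤
      f {(0, 0), (2, 2), (1, 2), (3, 2)} + f {(1, 1), (2, 0), (3, 0), (4, 0)} :=
    hf.add_le_add_of_subset_repairClosure (by decide +kernel) (by decide +kernel)
      (by decide +kernel)
  have hrecover : B + f {(2, 2), (1, 1), (0, 1), (3, 2), (4, 0)} ≤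
      f {(1, 1), (2, 2), (3, 0), (4, 0), (3, 2)} + f {(2, 2), (4, 4), (0, 1), (3, 1), (3, 2)} :=
    hf.file_add_le_add_of_subset_repairClosure (J := {0, 1, 2, 3}) (by decide)
      (by decide +kernel) (by decide +kernel) (by decide +kernel)
  have hexchange_congr : f {(1, 1), (2, 2), (3, 0), (4, 0), (3, 2)} =
      f {(2, 2), (4, 4), (0, 1), (3, 1), (3, 2)} :=
    hsymm.eq_of_relabel_eq c[0, 1, 4] (by decide +kernel)
  have hrecover_congr : f {(2, 2), (1, 1), (0, 1), (3, 2), (4, 0)} =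
      f {(0, 0), (2, 2), (1, 2), (3, 0), (4, 1)} :=
    hsymm.eq_of_relabel_eq c[0, 1, 2] (by decide +kernel)
  linarith

omit hsymm

theorem three_mul_le : 3 * B ≤ 5 * α + 10 * β := by
  have hg := hf.average_relabel
  have hsymm := isServerSymmetric_serverAverage f
  have hhelpers : serverAverage f {(1, 1), (2, 0), (3, 0), (4, 0)} ≤ α + 3 * β :=
    mod_cast hg.insert_server_le (m := 3) 1 rfl (by decide)
  linarith [hg.file_le_add_server_add_helper hsymm, hg.two_mul_file_add_helper_le hsymm,
    hg.file_add_le_four_mul hsymm]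

end IsRegenPolymatroid

/-! ### Joint entropies of a regenerating code -/

section Code

variable {Ω : Type*} {n k d : ℕ} {B α β : ℝ} {P : Ω → ℝ} {σM : Type*}
  {σW : Fin n → Type*} {σS : Fin n → Fin n → Type*} {M : Ω → σM} {W : ∀ j, Ω → σW j}
  {S : ∀ i j, Ω → σS i j}

/-- The partition of `Ω` given by the datum at `e`: `W_j` if `e = (j, j)`, and `S_i^j` if
`e = (i, j)` with `i ≠ j`. -/
def dataKer (W : ∀ j, Ω → σW j) (S : ∀ i j, Ω → σS i j) (e : Fin n × Fin n) : Setoid Ω :=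
  if e.1 = e.2 then Setoid.ker (W e.1) else Setoid.ker (S e.1 e.2)

theorem dataKer_self (j : Fin n) : dataKer W S (j, j) = Setoid.ker (W j) := if_pos rfl

theorem dataKer_of_ne {i j : Fin n} (h : i ≠ j) : dataKer W S (i, j) = Setoid.ker (S i j) :=
  if_neg h

theorem ker_restrict_eq_inf {ι : Type*} {τ : ι → Type*} (X : ∀ i, Ω → τ i) (I : Finset ι) :
    Setoid.ker (fun (ω : Ω) (i : I) => X i.1 ω) = I.inf fun i => Setoid.ker (X i) := by
  refine le_antisymm (Finset.le_inf fun i hi ω ω' h => congrFun h ⟨i, hi⟩) fun ω ω' h => ?_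
  exact funext fun i => Finset.inf_le (f := fun i => Setoid.ker (X i)) i.2 h

variable [Fintype Ω]

/-- The joint entropy of the data at the pairs in `X`. -/
noncomputable def dataEnt (P : Ω → ℝ) (W : ∀ j, Ω → σW j) (S : ∀ i j, Ω → σS i j)
    (X : Finset (Fin n × Fin n)) : ℝ :=
  partitionEnt P (X.inf (dataKer W S))

theorem dataEnt_insert_of_condH_eq_zero (hP : ∀ ω, 0 ≤ P ω) {T : Type*} {Y : Ω → T}
    {U : Type*} {Z : Ω → U} {X : Finset (Fin n × Fin n)} {e : Fin n × Fin n}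
    (hX : X.inf (dataKer W S) ≤ Setoid.ker Y) (he : dataKer W S e = Setoid.ker Z)
    (h : condH P Z Y = 0) :
    dataEnt P W S (insert e X) = dataEnt P W S X := by
  rw [condH_eq_partitionEnt, sub_eq_zero, inf_comm] at h
  rw [dataEnt, inf_insert, inf_comm, he]
  exact partitionEnt_inf_eq_of_le hP hX h

namespace IsRegenCode

variable (hcode : IsRegenCode n k d B α β P M W S)
include hcode

theorem dataEnt_send {X : Finset (Fin n × Fin n)} {i : Fin n} (j : Fin n) (hi : (i, i) ∈ X) :
    dataEnt P W S (insert (i, j) X) = dataEnt P W S X := by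
  rcases eq_or_ne i j with rfl | hij
  · rw [insert_eq_of_mem hi]
  · exact dataEnt_insert_of_condH_eq_zero hcode.prob_nonneg
      ((Finset.inf_le hi).trans_eq (dataKer_self i)) (dataKer_of_ne hij) (hcode.hSW i j hij)

theorem dataEnt_repair {X : Finset (Fin n × Fin n)} {I : Finset (Fin n)} {j : Fin n}
    (hI : d ≤ #I) (hj : j ∉ I) (h : ∀ i ∈ I, (i, j) ∈ X) :
    dataEnt P W S (insert (j, j) X) = dataEnt P W S X := by
  refine dataEnt_insert_of_condH_eq_zero hcode.prob_nonneg ?_ (dataKer_self j) (hcode.hWS j I hI hj)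
  refine le_of_le_of_eq (Finset.le_inf fun i hi => ?_)
    (ker_restrict_eq_inf (fun i => S i j) I).symm
  exact (Finset.inf_le (h i hi)).trans_eq (dataKer_of_ne (ne_of_mem_of_not_mem hi hj))

theorem dataEnt_file {J : Finset (Fin n)} (hJ : k ≤ #J) : dataEnt P W S J.diag = B := by
  have hker : Setoid.ker (jointW W J) = J.inf fun j => Setoid.ker (W j) := ker_restrict_eq_inf W J
  have hdiag : J.diag.inf (dataKer W S) = Setoid.ker (jointW W J) := by
    rw [hker, Finset.diag, inf_map]
    exact inf_congr rfl fun j _ => dataKer_self j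
  have hstore : ∀ j ∈ J, partitionEnt P (Setoid.ker M ⊓ Setoid.ker (W j)) =
      partitionEnt P (Setoid.ker M) := fun j _ => by
    simpa [condH_eq_partitionEnt, sub_eq_zero, inf_comm] using hcode.hWM j
  have hrecover := hcode.hMW J hJ
  rw [condH_eq_partitionEnt, sub_eq_zero] at hrecover
  rw [dataEnt, hdiag, ← hrecover, hker, partitionEnt_inf_finset_inf hcode.prob_nonneg hstore,
    ← entH_eq_partitionEnt, hcode.hMB]

theorem isRegenPolymatroid : IsRegenPolymatroid k d B α β (dataEnt P W S) where
  empty := by rw [dataEnt, inf_empty, partitionEnt_top hcode.prob_sum]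
  mono h := partitionEnt_anti hcode.prob_nonneg (Finset.inf_mono h)
  submod X Y := by
    rw [dataEnt, inf_union]
    exact partitionEnt_submod hcode.prob_nonneg (Finset.inf_mono inter_subset_left)
      (Finset.inf_mono inter_subset_right)
  send := hcode.dataEnt_send
  repair := hcode.dataEnt_repair
  server j := by
    rw [dataEnt, inf_singleton, dataKer_self, ← entH_eq_partitionEnt, hcode.hWα]
  helper hij := by
    rw [dataEnt, inf_singleton, dataKer_of_ne hij, ← entH_eq_partitionEnt, hcode.hSβ _ _ hij]
  file := hcode.dataEnt_file

end IsRegenCode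

end Code

/-- every `(5,4,4)` exact-repair code satisfies `14B ≤ 21α + 57β`. -/
theorem stmt_16 {Ω : Type*} [Fintype Ω] {B α β : ℝ} {P : Ω → ℝ}
    {σM : Type*} {σW : Fin 5 → Type*} {σS : Fin 5 → Fin 5 → Type*}
    {M : Ω → σM} {W : ∀ j, Ω → σW j} {S : ∀ i j, Ω → σS i j}
    (hcode : IsRegenCode 5 4 4 B α β P M W S) :
    14 * B ≤ 21 * α + 57 * β := by
  have hf : IsRegenPolymatroid 4 4 B α β (dataEnt P W S) := hcode.isRegenPolymatroid
  have hcut : B ≤ 10 * β := by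
    have h := hf.le_Bfun (Nat.zero_le 4) le_rfl (by decide)
    norm_num [Bfun] at h
    linarith
  linarith [hf.three_mul_le, hcode.hβ]
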